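/- For any A, P > 0, with A₁ = √(A² + P ln(1+P)), the amplitude-constrained AWGN capacity satisfies the non-asymptotic converse bound: (1/2) ln(1+P) − C(A,P) ≥ 8 · ( (√(1+P) − 1) · ln(1+P) / (A + A₁) )² · φ( √(1+P)·A₁/P + A/P )², where φ(y) = e^{−y²/2}/√(2π) is the standard normal density. -/

import Mathlib

open MeasureTheory ProbabilityTheory

open scoped Classical in
/-- Kullback–Leibler divergence (natural logarithm), valued in `EReal`:
`D(μ‖ν) = ∫ log(dμ/dν) dμ` if `μ ≪ ν` and the log-likelihood ratio is integrable,
and `+∞` otherwise. -/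
noncomputable def klDiv {α : Type*} [MeasurableSpace α] (μ ν : Measure α) : EReal :=
  if μ ≪ ν ∧ Integrable (llr μ ν) μ then ((∫ x, llr μ ν x ∂μ : ℝ) : EReal) else ⊤

/-- The joint law of `(X, X+Z)` where `X ~ μ` and `Z ~ N(0,1)` is independent of `X`. -/
noncomputable def jointLaw (μ : Measure ℝ) : Measure (ℝ × ℝ) :=
  (μ.prod (gaussianReal 0 1)).map fun p => (p.1, p.1 + p.2)

/-- The mutual information `I(X; X+Z)` for `X ~ μ` and `Z ~ N(0,1)` independent of `X`:
the KL divergence between the joint law of `(X, X+Z)` and the product of its marginals. -/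
noncomputable def mutInfo (μ : Measure ℝ) : EReal :=
  klDiv (jointLaw μ) ((jointLaw μ).fst.prod (jointLaw μ).snd)

/-- The amplitude-constrained AWGN capacity `C(A,P)`: the supremum of `I(X; X+Z)` over laws of
real random variables `X` with `|X| ≤ A` almost surely and `E[X²] ≤ P`, with `Z ~ N(0,1)`
independent of `X`. -/
noncomputable def CAP (A P : ℝ) : EReal :=
  ⨆ μ ∈ {μ : Measure ℝ | IsProbabilityMeasure μ ∧ μ {x | A < |x|} = 0 ∧ ∫ x, x ^ 2 ∂μ ≤ P},
    mutInfo μ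

/-- The standard normal density `φ(y) = e^{-y²/2}/√(2π)`. -/
noncomputable def stdPhi (y : ℝ) : ℝ := Real.exp (-(y ^ 2) / 2) / Real.sqrt (2 * Real.pi)


/-- Output density of the channel. -/
noncomputable def outPDF (μ : Measure ℝ) (y : ℝ) : ENNReal := ∫⁻ x, gaussianPDF x 1 y ∂μ

lemma measurable_kernelPDF : Measurable (fun p : ℝ × ℝ => gaussianPDF p.1 1 p.2) := by
  have h : Measurable (fun p : ℝ × ℝ => (p.1, (1 : NNReal), p.2)) := by fun_prop
  exact measurable_uncurry_gaussianPDF.comp h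

lemma measurable_shiftMap : Measurable (fun p : ℝ × ℝ => (p.1, p.1 + p.2)) := by fun_prop

lemma measurable_outPDF (μ : Measure ℝ) [IsProbabilityMeasure μ] : Measurable (outPDF μ) := by
  unfold outPDF
  exact Measurable.lintegral_prod_left' measurable_kernelPDF

lemma jointLaw_eq (μ : Measure ℝ) [IsProbabilityMeasure μ] :
    jointLaw μ = (μ.prod volume).withDensity (fun p => gaussianPDF p.1 1 p.2) := by
  ext s hs
  rw [jointLaw, Measure.map_apply measurable_shiftMap hs,
    Measure.prod_apply (measurable_shiftMap hs), withDensity_apply _ hs,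
    ← lintegral_indicator hs, lintegral_prod _ (measurable_kernelPDF.indicator hs).aemeasurable]
  refine lintegral_congr fun x => ?_
  have hsx : MeasurableSet (Prod.mk x ⁻¹' s) := measurable_prodMk_left hs
  have h1 : gaussianReal x 1 = (gaussianReal 0 1).map (fun z => x + z) := by
    rw [gaussianReal_map_const_add, zero_add]
  have h2 := gaussianReal_apply x (one_ne_zero : (1 : NNReal) ≠ 0) (Prod.mk x ⁻¹' s)
  rw [h1, Measure.map_apply (by fun_prop) hsx, ← lintegral_indicator hsx] at h2
  exact h2

instance jointLaw_prob (μ : Measure ℝ) [IsProbabilityMeasure μ] :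
    IsProbabilityMeasure (jointLaw μ) := by
  unfold jointLaw
  exact Measure.isProbabilityMeasure_map measurable_shiftMap.aemeasurable

lemma jointLaw_fst (μ : Measure ℝ) [IsProbabilityMeasure μ] : (jointLaw μ).fst = μ := by
  unfold jointLaw Measure.fst
  rw [Measure.map_map measurable_fst measurable_shiftMap]
  change Measure.map Prod.fst (μ.prod (gaussianReal 0 1)) = μ
  simp

lemma jointLaw_snd (μ : Measure ℝ) [IsProbabilityMeasure μ] :
    (jointLaw μ).snd = volume.withDensity (outPDF μ) := by
  ext s hs
  rw [Measure.snd_apply hs, jointLaw_eq, withDensity_apply _ (measurable_snd hs),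
    ← lintegral_indicator (measurable_snd hs),
    lintegral_prod_symm' _ (measurable_kernelPDF.indicator (measurable_snd hs)),
    withDensity_apply _ hs, ← lintegral_indicator hs]
  refine lintegral_congr fun y => ?_
  by_cases hy : y ∈ s
  · simp [Set.indicator, hy, outPDF]
  · simp [Set.indicator, hy]

lemma kernelPDF_le_one (x y : ℝ) : gaussianPDFReal x 1 y ≤ 1 := by
  rw [gaussianPDFReal]
  have h1 : (√(2 * Real.pi * (1 : NNReal)))⁻¹ ≤ 1 := by
    apply inv_le_one_of_one_le₀
    rw [Real.one_le_sqrt]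
    have := Real.pi_gt_three
    simp; linarith
  have h2 : Real.exp (-(y - x) ^ 2 / (2 * (1 : NNReal))) ≤ 1 := by
    rw [Real.exp_le_one_iff]
    simp; nlinarith [sq_nonneg (y - x)]
  exact mul_le_one₀ h1 (Real.exp_pos _).le h2

lemma outPDF_le_one (μ : Measure ℝ) [IsProbabilityMeasure μ] (y : ℝ) : outPDF μ y ≤ 1 := by
  unfold outPDF
  calc _ ≤ ∫⁻ x, 1 ∂μ := lintegral_mono fun x => by
        rw [gaussianPDF]; exact ENNReal.ofReal_le_one.2 (kernelPDF_le_one x y)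
    _ = 1 := by simp

lemma le_outPDF (μ : Measure ℝ) [IsProbabilityMeasure μ] (A : ℝ) (hA : 0 < A)
    (hμ : ∀ᵐ x ∂μ, |x| ≤ A) (y : ℝ) :
    ENNReal.ofReal (gaussianPDFReal 0 1 (|y| + A)) ≤ outPDF μ y := by
  unfold outPDF
  calc ENNReal.ofReal (gaussianPDFReal 0 1 (|y| + A))
      = ∫⁻ x, ENNReal.ofReal (gaussianPDFReal 0 1 (|y| + A)) ∂μ := by simp
    _ ≤ _ := by
      refine lintegral_mono_ae ?_
      filter_upwards [hμ] with x hx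
      rw [gaussianPDF]
      apply ENNReal.ofReal_le_ofReal
      rw [gaussianPDFReal, gaussianPDFReal]
      refine mul_le_mul_of_nonneg_left (Real.exp_le_exp.2 ?_) (by positivity)
      have h : |y - x| ≤ |y| + A := (abs_sub y x).trans (by linarith)
      have h2 : (y - x) ^ 2 ≤ (|y| + A) ^ 2 := by
        rw [← sq_abs (y - x)]
        exact pow_le_pow_left₀ (abs_nonneg _) h 2
      simp only [NNReal.coe_one, mul_one, sub_zero]
      linarith

lemma outPDF_pos (μ : Measure ℝ) [IsProbabilityMeasure μ] (A : ℝ) (hA : 0 < A)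
    (hμ : ∀ᵐ x ∂μ, |x| ≤ A) (y : ℝ) : 0 < outPDF μ y :=
  lt_of_lt_of_le (ENNReal.ofReal_pos.2 (gaussianPDFReal_pos _ _ _ one_ne_zero))
    (le_outPDF μ A hA hμ y)

lemma outPDF_ne_top (μ : Measure ℝ) [IsProbabilityMeasure μ] (y : ℝ) : outPDF μ y ≠ ⊤ :=
  ((outPDF_le_one μ y).trans_lt ENNReal.one_lt_top).ne

lemma jointLaw_eq_withDensity (μ : Measure ℝ) [IsProbabilityMeasure μ] (A : ℝ) (hA : 0 < A)
    (hμ : ∀ᵐ x ∂μ, |x| ≤ A) :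
    jointLaw μ = ((jointLaw μ).fst.prod (jointLaw μ).snd).withDensity
      (fun p => gaussianPDF p.1 1 p.2 / outPDF μ p.2) := by
  rw [jointLaw_fst, jointLaw_snd, prod_withDensity_right (measurable_outPDF μ),
    ← withDensity_mul (f := fun z : ℝ × ℝ => outPDF μ z.2)
      (g := fun p : ℝ × ℝ => gaussianPDF p.1 1 p.2 / outPDF μ p.2) _
      ((measurable_outPDF μ).comp measurable_snd)
      (measurable_kernelPDF.div ((measurable_outPDF μ).comp measurable_snd)), jointLaw_eq]
  congr 1
  ext p
  simp only [Pi.mul_apply]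
  rw [ENNReal.mul_div_cancel (outPDF_pos μ A hA hμ p.2).ne' (outPDF_ne_top μ p.2)]

lemma log_kernelPDF (x y : ℝ) (v : NNReal) (hv : v ≠ 0) : Real.log (gaussianPDFReal x v y) =
    -(1/2) * Real.log (2 * Real.pi * v) - (y - x) ^ 2 / (2 * v) := by
  have hv' : (0 : ℝ) < v := by positivity
  rw [gaussianPDFReal, Real.log_mul (by positivity) (by positivity), Real.log_exp, Real.log_inv,
    Real.log_sqrt (by positivity)]
  ring

lemma llr_joint (μ : Measure ℝ) [IsProbabilityMeasure μ] (A : ℝ) (hA : 0 < A)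
    (hμ : ∀ᵐ x ∂μ, |x| ≤ A) :
    llr (jointLaw μ) ((jointLaw μ).fst.prod (jointLaw μ).snd) =ᵐ[jointLaw μ]
      fun p => Real.log (gaussianPDFReal p.1 1 p.2) - Real.log (outPDF μ p.2).toReal := by
  set Q := (jointLaw μ).fst.prod (jointLaw μ).snd with hQ
  have hm : Measurable (fun p : ℝ × ℝ => gaussianPDF p.1 1 p.2 / outPDF μ p.2) :=
    measurable_kernelPDF.div ((measurable_outPDF μ).comp measurable_snd)
  have heq := jointLaw_eq_withDensity μ A hA hμ
  rw [← hQ] at heq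
  have hac : jointLaw μ ≪ Q := by
    rw [heq]; exact withDensity_absolutelyContinuous _ _
  have h := Measure.rnDeriv_withDensity Q hm
  rw [← heq] at h
  filter_upwards [hac.ae_le h] with p hp
  rw [llr_def]
  simp only
  rw [hp, ENNReal.toReal_div, toReal_gaussianPDF, Real.log_div]
  · exact (gaussianPDFReal_pos _ _ _ one_ne_zero).ne'
  · exact (ENNReal.toReal_pos (outPDF_pos μ A hA hμ p.2).ne' (outPDF_ne_top μ p.2)).ne'

lemma integrable_joint_iff (μ : Measure ℝ) [IsProbabilityMeasure μ] {f : ℝ × ℝ → ℝ}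
    (hf : Measurable f) :
    Integrable f (jointLaw μ) ↔
      Integrable (fun p : ℝ × ℝ => f (p.1, p.1 + p.2)) (μ.prod (gaussianReal 0 1)) := by
  unfold jointLaw
  exact integrable_map_measure hf.aestronglyMeasurable measurable_shiftMap.aemeasurable

lemma integral_joint (μ : Measure ℝ) [IsProbabilityMeasure μ] {f : ℝ × ℝ → ℝ}
    (hf : Measurable f) :
    ∫ p, f p ∂(jointLaw μ) = ∫ p, f (p.1, p.1 + p.2) ∂(μ.prod (gaussianReal 0 1)) := by
  unfold jointLaw
  exact integral_map measurable_shiftMap.aemeasurable hf.aestronglyMeasurable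

lemma integrable_sq_gauss : Integrable (fun z : ℝ => z ^ 2) (gaussianReal 0 1) := by
  have := (memLp_id_gaussianReal (μ := 0) (v := 1) 2).integrable_sq
  simpa using this

lemma integral_sq_gauss : ∫ z, z ^ 2 ∂(gaussianReal 0 1) = 1 := by
  have h := variance_fun_id_gaussianReal (μ := 0) (v := 1)
  rw [variance_eq_integral (by fun_prop)] at h
  simpa using h

lemma integrable_id_gauss : Integrable (fun z : ℝ => z) (gaussianReal 0 1) := by
  have := (memLp_id_gaussianReal (μ := 0) (v := 1) 1).integrable (by simp)
  exact this

lemma integrable_sq_input (μ : Measure ℝ) [IsProbabilityMeasure μ] (A : ℝ)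
    (hμ : ∀ᵐ x ∂μ, |x| ≤ A) : Integrable (fun x : ℝ => x ^ 2) μ := by
  refine Integrable.of_bound (by fun_prop) (A ^ 2) ?_
  filter_upwards [hμ] with x hx
  rw [Real.norm_eq_abs, abs_pow]
  gcongr

lemma integrable_id_input (μ : Measure ℝ) [IsProbabilityMeasure μ] (A : ℝ)
    (hμ : ∀ᵐ x ∂μ, |x| ≤ A) : Integrable (fun x : ℝ => x) μ :=
  Integrable.of_bound (by fun_prop) A hμ

lemma integrable_out_sq (μ : Measure ℝ) [IsProbabilityMeasure μ] (A : ℝ)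
    (hμ : ∀ᵐ x ∂μ, |x| ≤ A) :
    Integrable (fun p : ℝ × ℝ => (p.1 + p.2) ^ 2) (μ.prod (gaussianReal 0 1)) := by
  have h1 := (integrable_sq_input μ A hμ).comp_fst (gaussianReal 0 1)
  have h2 := integrable_sq_gauss.comp_snd μ
  have h3 := ((integrable_id_input μ A hμ).mul_prod integrable_id_gauss).const_mul 2
  refine ((h1.add h3).add h2).congr (Filter.Eventually.of_forall fun p => ?_)
  simp only [Pi.add_apply]
  ring

lemma integral_out_sq (μ : Measure ℝ) [IsProbabilityMeasure μ] (A : ℝ)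
    (hμ : ∀ᵐ x ∂μ, |x| ≤ A) :
    ∫ p : ℝ × ℝ, (p.1 + p.2) ^ 2 ∂(μ.prod (gaussianReal 0 1)) = ∫ x, x ^ 2 ∂μ + 1 := by
  have h1 := (integrable_sq_input μ A hμ).comp_fst (gaussianReal 0 1)
  have h2 := integrable_sq_gauss.comp_snd μ
  have h3 := ((integrable_id_input μ A hμ).mul_prod integrable_id_gauss).const_mul 2
  have : (fun p : ℝ × ℝ => (p.1 + p.2) ^ 2) =
      fun p => p.1 ^ 2 + 2 * (p.1 * p.2) + p.2 ^ 2 := by ext p; ring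
  have e1 : ∫ p : ℝ × ℝ, p.1 ^ 2 ∂(μ.prod (gaussianReal 0 1)) = ∫ x, x ^ 2 ∂μ := by
    rw [integral_fun_fst (fun x : ℝ => x ^ 2)]; simp
  have e2 : ∫ p : ℝ × ℝ, p.2 ^ 2 ∂(μ.prod (gaussianReal 0 1)) = 1 := by
    rw [integral_fun_snd (fun x : ℝ => x ^ 2), integral_sq_gauss]; simp
  have e3 : ∫ p : ℝ × ℝ, p.1 * p.2 ∂(μ.prod (gaussianReal 0 1)) = 0 := by
    rw [integral_prod_mul (fun x : ℝ => x) (fun x : ℝ => x), integral_id_gaussianReal]; simp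
  rw [this, integral_add (f := fun p : ℝ × ℝ => p.1 ^ 2 + 2 * (p.1 * p.2)) (h1.add h3) h2,
    integral_add h1 h3, integral_const_mul, e1, e2, e3]
  ring

lemma measurable_logKernel :
    Measurable (fun p : ℝ × ℝ => Real.log (gaussianPDFReal p.1 1 p.2)) := by
  have : (fun p : ℝ × ℝ => Real.log (gaussianPDFReal p.1 1 p.2)) = fun p =>
    -(1/2) * Real.log (2 * Real.pi * (1 : NNReal)) - (p.2 - p.1) ^ 2 / (2 * (1 : NNReal)) := by
      ext p; exact log_kernelPDF _ _ _ one_ne_zero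
  rw [this]; fun_prop

lemma integrable_logKernel (μ : Measure ℝ) [IsProbabilityMeasure μ] :
    Integrable (fun p : ℝ × ℝ => Real.log (gaussianPDFReal p.1 1 p.2)) (jointLaw μ) := by
  rw [integrable_joint_iff μ measurable_logKernel]
  simp only [log_kernelPDF _ _ _ (one_ne_zero : (1 : NNReal) ≠ 0), add_sub_cancel_left]
  exact (integrable_const _).sub ((integrable_sq_gauss.comp_snd μ).div_const _)

lemma integral_logKernel (μ : Measure ℝ) [IsProbabilityMeasure μ] :
    ∫ p : ℝ × ℝ, Real.log (gaussianPDFReal p.1 1 p.2) ∂(jointLaw μ) =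
      -(1/2) * Real.log (2 * Real.pi) - 1 / 2 := by
  rw [integral_joint μ measurable_logKernel]
  simp only [log_kernelPDF _ _ _ (one_ne_zero : (1 : NNReal) ≠ 0), add_sub_cancel_left]
  have e2 : ∫ p : ℝ × ℝ, p.2 ^ 2 ∂(μ.prod (gaussianReal 0 1)) = 1 := by
    rw [integral_fun_snd (fun x : ℝ => x ^ 2), integral_sq_gauss]; simp
  rw [integral_sub (integrable_const _) ((integrable_sq_gauss.comp_snd μ).div_const _),
    integral_div, e2]
  simp

lemma integrable_logOut (μ : Measure ℝ) [IsProbabilityMeasure μ] (A : ℝ) (hA : 0 < A)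
    (hμ : ∀ᵐ x ∂μ, |x| ≤ A) :
    Integrable (fun p : ℝ × ℝ => Real.log (outPDF μ p.2).toReal) (jointLaw μ) := by
  have hm : Measurable (fun p : ℝ × ℝ => Real.log (outPDF μ p.2).toReal) :=
    Real.measurable_log.comp (((measurable_outPDF μ).comp measurable_snd).ennreal_toReal)
  rw [integrable_joint_iff μ hm]
  have hb := (((integrable_out_sq μ A hμ).add (integrable_const (A ^ 2))).add
    (integrable_const ((1/2) * Real.log (2 * Real.pi))))
  refine hb.mono' (hm.comp measurable_shiftMap).aestronglyMeasurable
    (Filter.Eventually.of_forall fun p => ?_)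
  simp only [Pi.add_apply]
  set y := p.1 + p.2
  have h0 := ENNReal.toReal_pos (outPDF_pos μ A hA hμ y).ne' (outPDF_ne_top μ y)
  have h1 : (outPDF μ y).toReal ≤ 1 := by
    simpa using ENNReal.toReal_mono ENNReal.one_ne_top (outPDF_le_one μ y)
  have h2 : gaussianPDFReal 0 1 (|y| + A) ≤ (outPDF μ y).toReal :=
    (ENNReal.ofReal_le_iff_le_toReal (outPDF_ne_top μ y)).1 (le_outPDF μ A hA hμ y)
  have h3 := Real.log_le_log (gaussianPDFReal_pos _ _ _ one_ne_zero) h2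
  rw [log_kernelPDF _ _ _ one_ne_zero] at h3
  have h4 := Real.log_nonpos h0.le h1
  rw [Real.norm_eq_abs, abs_of_nonpos h4]
  simp only [NNReal.coe_one, mul_one, sub_zero] at h3
  nlinarith [sq_nonneg (|y| - A), sq_abs y]

lemma mutInfo_le (μ : Measure ℝ) [IsProbabilityMeasure μ] (A : ℝ) (hA : 0 < A)
    (hμ : ∀ᵐ x ∂μ, |x| ≤ A) (r : ℝ → ℝ) (hr : Measurable r) (hr0 : ∀ y, 0 < r y)
    (hr1 : ∫⁻ y, ENNReal.ofReal (r y) = 1)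
    (hri : Integrable (fun p : ℝ × ℝ => Real.log (r p.2)) (jointLaw μ)) :
    mutInfo μ ≤ ((∫ p : ℝ × ℝ, Real.log (gaussianPDFReal p.1 1 p.2) ∂(jointLaw μ)
      - ∫ p : ℝ × ℝ, Real.log (r p.2) ∂(jointLaw μ) : ℝ) : EReal) := by
  have hac : jointLaw μ ≪ (jointLaw μ).fst.prod (jointLaw μ).snd := by
    conv_lhs => rw [jointLaw_eq_withDensity μ A hA hμ]
    exact withDensity_absolutelyContinuous _ _
  have hl := llr_joint μ A hA hμ
  have hk := integrable_logKernel μ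
  have ho := integrable_logOut μ A hA hμ
  have hint : Integrable (llr (jointLaw μ) ((jointLaw μ).fst.prod (jointLaw μ).snd))
      (jointLaw μ) := (hk.sub ho).congr hl.symm
  rw [mutInfo, klDiv, if_pos ⟨hac, hint⟩, EReal.coe_le_coe_iff, integral_congr_ae hl,
    integral_sub hk ho]
  have hom : Measurable (fun y => (outPDF μ y).toReal) := (measurable_outPDF μ).ennreal_toReal
  have hq : Measurable (fun y => r y / (outPDF μ y).toReal) := hr.div hom
  have hpos : ∀ y, 0 < (outPDF μ y).toReal := fun y =>
    ENNReal.toReal_pos (outPDF_pos μ A hA hμ y).ne' (outPDF_ne_top μ y)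
  have hlin : ∫⁻ p : ℝ × ℝ, ENNReal.ofReal (r p.2 / (outPDF μ p.2).toReal) ∂(jointLaw μ) = 1 := by
    have h1 : ∫⁻ p : ℝ × ℝ, ENNReal.ofReal (r p.2 / (outPDF μ p.2).toReal) ∂(jointLaw μ)
        = ∫⁻ y, ENNReal.ofReal (r y / (outPDF μ y).toReal) ∂(jointLaw μ).snd := by
      rw [Measure.snd, lintegral_map hq.ennreal_ofReal measurable_snd]
    rw [h1, jointLaw_snd, lintegral_withDensity_eq_lintegral_mul _ (measurable_outPDF μ)
      hq.ennreal_ofReal, ← hr1]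
    refine lintegral_congr fun y => ?_
    simp only [Pi.mul_apply]
    rw [ENNReal.ofReal_div_of_pos (hpos y), ENNReal.ofReal_toReal (outPDF_ne_top μ y),
      ENNReal.mul_div_cancel (outPDF_pos μ A hA hμ y).ne' (outPDF_ne_top μ y)]
  have hqi : Integrable (fun p : ℝ × ℝ => r p.2 / (outPDF μ p.2).toReal) (jointLaw μ) := by
    refine ⟨(hq.comp measurable_snd).aestronglyMeasurable, ?_⟩
    rw [hasFiniteIntegral_iff_ofReal
      (Filter.Eventually.of_forall fun p => (div_pos (hr0 _) (hpos _)).le), hlin]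
    exact ENNReal.one_lt_top
  have hq1 : ∫ p : ℝ × ℝ, r p.2 / (outPDF μ p.2).toReal ∂(jointLaw μ) = 1 := by
    rw [integral_eq_lintegral_of_nonneg_ae
      (Filter.Eventually.of_forall fun p => (div_pos (hr0 _) (hpos _)).le)
      (hq.comp measurable_snd).aestronglyMeasurable, hlin]
    simp
  have hmono := integral_mono (hri.sub ho) (hqi.sub (integrable_const (1 : ℝ))) (fun p => by
    simp only [Pi.sub_apply]
    rw [← Real.log_div (hr0 _).ne' (hpos _).ne']
    exact Real.log_le_sub_one_of_pos (div_pos (hr0 _) (hpos _)))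
  simp only [Pi.sub_apply] at hmono
  rw [integral_sub hri ho, integral_sub hqi (integrable_const _), hq1] at hmono
  simp at hmono
  linarith

lemma gauss_diff (s t : ℝ) (hs : 0 ≤ s) (hst : s ≤ t) :
    (gaussianReal 0 1).real (Set.Icc (-s) s) + 2 * (t - s) * stdPhi t ≤
      (gaussianReal 0 1).real (Set.Icc (-t) t) := by
  have hsub : Set.Icc (-s) s ⊆ Set.Icc (-t) t := Set.Icc_subset_Icc (by linarith) hst
  have hphi : stdPhi t = gaussianPDFReal 0 1 t := by
    simp [stdPhi, gaussianPDFReal]; ring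
  set S := Set.Icc (-t) t \ Set.Icc (-s) s with hS
  have hSm : MeasurableSet S := measurableSet_Icc.diff measurableSet_Icc
  have h1 : (gaussianReal 0 1).real S = (gaussianReal 0 1).real (Set.Icc (-t) t) -
      (gaussianReal 0 1).real (Set.Icc (-s) s) := measureReal_sdiff hsub measurableSet_Icc
  have h2 : ENNReal.ofReal (gaussianPDFReal 0 1 t) * volume S ≤ gaussianReal 0 1 S := by
    rw [gaussianReal_apply _ one_ne_zero, ← setLIntegral_const]
    refine setLIntegral_mono' hSm fun z hz => ?_
    rw [gaussianPDF]
    apply ENNReal.ofReal_le_ofReal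
    rw [gaussianPDFReal, gaussianPDFReal]
    refine mul_le_mul_of_nonneg_left (Real.exp_le_exp.2 ?_) (by positivity)
    have h3 : z ^ 2 ≤ t ^ 2 := sq_le_sq' hz.1.1 hz.1.2
    simp only [NNReal.coe_one, mul_one, sub_zero]
    linarith
  have h3 : volume S = ENNReal.ofReal (2 * (t - s)) := by
    rw [hS, measure_sdiff hsub measurableSet_Icc.nullMeasurableSet (by simp), Real.volume_Icc,
      Real.volume_Icc, ← ENNReal.ofReal_sub _ (by linarith)]
    congr 1; ring
  rw [h3, ← ENNReal.ofReal_mul (gaussianPDFReal_nonneg _ _ _)] at h2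
  have h4 := (ENNReal.ofReal_le_iff_le_toReal (measure_ne_top _ _)).1 h2
  have h5 : gaussianPDFReal 0 1 t * (2 * (t - s)) ≤ (gaussianReal 0 1).real S := h4
  rw [hphi]
  linarith

lemma gauss_scale (P s : ℝ) (hP : 0 < P) (v : NNReal) (hv : (v : ℝ) = 1 + P) :
    (gaussianReal 0 v).real (Set.Icc (-(√(1 + P) * s)) (√(1 + P) * s)) =
      (gaussianReal 0 1).real (Set.Icc (-s) s) := by
  have hσ : 0 < √(1 + P) := Real.sqrt_pos.2 (by linarith)
  have h1 : gaussianReal 0 v = (gaussianReal 0 1).map (fun z => √(1 + P) * z) := by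
    rw [gaussianReal_map_const_mul]
    congr 1
    · simp
    · ext
      simp [hv, Real.sq_sqrt (by linarith : (0:ℝ) ≤ 1 + P)]
  rw [h1, map_measureReal_apply (by fun_prop) measurableSet_Icc]
  congr 1
  ext z
  simp only [Set.mem_preimage, Set.mem_Icc]
  constructor
  · rintro ⟨a, b⟩
    exact ⟨le_of_mul_le_mul_left (by linarith) hσ, le_of_mul_le_mul_left b hσ⟩
  · rintro ⟨a, b⟩
    constructor <;> nlinarith

lemma out_prob (μ : Measure ℝ) [IsProbabilityMeasure μ] (A t : ℝ)
    (hμ : ∀ᵐ x ∂μ, |x| ≤ A) :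
    (gaussianReal 0 1).real (Set.Icc (-t) t) ≤
      (jointLaw μ).real (Prod.snd ⁻¹' (Set.Icc (-(t + A)) (t + A))) := by
  have e : (gaussianReal 0 1).real (Set.Icc (-t) t) =
      (μ.prod (gaussianReal 0 1)).real (Set.univ ×ˢ Set.Icc (-t) t) := by
    rw [measureReal_prod_prod]; simp
  rw [e, jointLaw, map_measureReal_apply measurable_shiftMap (measurable_snd measurableSet_Icc)]
  have hae : ∀ᵐ p ∂(μ.prod (gaussianReal 0 1)), |p.1| ≤ A :=
    Measure.quasiMeasurePreserving_fst.ae hμ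
  unfold Measure.real
  refine ENNReal.toReal_mono (measure_ne_top _ _) (measure_mono_ae ?_)
  filter_upwards [hae] with p hp hp2
  have h2 := hp2.2
  have h3 := abs_le.1 hp
  change -(t + A) ≤ p.1 + p.2 ∧ p.1 + p.2 ≤ t + A
  exact ⟨by linarith [h2.1], by linarith [h2.2]⟩

lemma hoeffding_indicator (N : Measure ℝ) [IsProbabilityMeasure N] (F : Set ℝ)
    (hF : MeasurableSet F) (l : ℝ) :
    ∫ y, Real.exp (l * F.indicator 1 y) ∂N ≤ Real.exp (l * N.real F + l ^ 2 / 8) := by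
  have hX : Measurable (F.indicator (1 : ℝ → ℝ)) := measurable_one.indicator hF
  have h := (hasSubgaussianMGF_of_mem_Icc (μ := N) (X := F.indicator (1 : ℝ → ℝ)) (a := 0) (b := 1)
    hX.aemeasurable (Filter.Eventually.of_forall fun y => by
      by_cases hy : y ∈ F <;> simp [hy])).mgf_le l
  rw [integral_indicator_one hF] at h
  unfold mgf at h
  have e : ∀ y, Real.exp (l * (F.indicator (1 : ℝ → ℝ) y - N.real F)) =
      Real.exp (l * F.indicator 1 y) * Real.exp (-(l * N.real F)) := fun y => by
    rw [← Real.exp_add]; ring_nf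
  simp only [e] at h
  rw [integral_mul_const] at h
  have e2 : Real.exp (l * N.real F + l ^ 2 / 8) =
    Real.exp (l ^ 2 / 8) * Real.exp (l * N.real F) := by rw [← Real.exp_add]; ring_nf
  rw [e2]
  have h3 : ((((‖(1:ℝ) - 0‖₊ / 2) ^ 2 : NNReal) : ℝ)) * l ^ 2 / 2 = l ^ 2 / 8 := by
    simp; ring
  rw [h3, Real.exp_neg, ← div_eq_mul_inv, div_le_iff₀ (Real.exp_pos _)] at h
  exact h

lemma mutInfo_bound (μ : Measure ℝ) [IsProbabilityMeasure μ] (A P : ℝ) (hA : 0 < A) (hP : 0 < P)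
    (hμ : ∀ᵐ x ∂μ, |x| ≤ A) (hμP : ∫ x, x ^ 2 ∂μ ≤ P) (v : NNReal) (hv : (v : ℝ) = 1 + P)
    (F : Set ℝ) (hF : MeasurableSet F) (l : ℝ) :
    mutInfo μ ≤ ((1 / 2 * Real.log (1 + P) - l * ((jointLaw μ).real (Prod.snd ⁻¹' F)
      - (gaussianReal 0 v).real F) + l ^ 2 / 8 : ℝ) : EReal) := by
  have hv0 : v ≠ 0 := by
    rintro rfl
    simp at hv; linarith
  have hX : Measurable (F.indicator (1 : ℝ → ℝ)) := measurable_one.indicator hF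
  set M := ∫ y, Real.exp (l * F.indicator 1 y) ∂(gaussianReal 0 v) with hM
  have hgm : Measurable (fun y => Real.exp (l * F.indicator (1 : ℝ → ℝ) y)) := by fun_prop
  have hgi : Integrable (fun y => Real.exp (l * F.indicator (1 : ℝ → ℝ) y)) (gaussianReal 0 v) := by
    refine Integrable.of_bound hgm.aestronglyMeasurable (Real.exp |l|)
      (Filter.Eventually.of_forall fun y => ?_)
    rw [Real.norm_eq_abs, abs_of_pos (Real.exp_pos _), Real.exp_le_exp]
    by_cases hy : y ∈ F
    · simp [hy, le_abs_self]
    · simp [hy]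
  have hMpos : 0 < M := integral_exp_pos hgi
  have hMle := hoeffding_indicator (gaussianReal 0 v) F hF l
  rw [← hM] at hMle
  have hlogM : Real.log M ≤ l * (gaussianReal 0 v).real F + l ^ 2 / 8 :=
    (Real.log_le_iff_le_exp hMpos).2 hMle
  let r : ℝ → ℝ := fun y =>
    gaussianPDFReal 0 v y * (Real.exp (l * F.indicator (1 : ℝ → ℝ) y) / M)
  have hr : Measurable r := (measurable_gaussianPDFReal 0 v).mul (hgm.div_const M)
  have hr0 : ∀ y, 0 < r y := fun y =>
    mul_pos (gaussianPDFReal_pos _ _ _ hv0) (div_pos (Real.exp_pos _) hMpos)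
  have hr1 : ∫⁻ y, ENNReal.ofReal (r y) = 1 := by
    have h1 : ∫⁻ y, ENNReal.ofReal (r y) =
        ∫⁻ y, ENNReal.ofReal (Real.exp (l * F.indicator (1 : ℝ → ℝ) y) / M)
          ∂(gaussianReal 0 v) := by
      rw [gaussianReal_of_var_ne_zero _ hv0,
        lintegral_withDensity_eq_lintegral_mul _ (measurable_gaussianPDF 0 v)
        (hgm.div_const M).ennreal_ofReal]
      refine lintegral_congr fun y => ?_
      simp only [Pi.mul_apply, gaussianPDF]
      rw [← ENNReal.ofReal_mul (gaussianPDFReal_nonneg _ _ _)]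
    rw [h1, ← ofReal_integral_eq_lintegral_ofReal (hgi.div_const M)
      (Filter.Eventually.of_forall fun y => (div_pos (Real.exp_pos _) hMpos).le),
      integral_div, ← hM, div_self hMpos.ne', ENNReal.ofReal_one]
  have hlogr : ∀ y, Real.log (r y) = (-(1/2) * Real.log (2 * Real.pi * v) - Real.log M)
      - y ^ 2 / (2 * v) + l * F.indicator 1 y := fun y => by
    rw [Real.log_mul (gaussianPDFReal_pos _ _ _ hv0).ne' (div_pos (Real.exp_pos _) hMpos).ne',
      Real.log_div (Real.exp_pos _).ne' hMpos.ne', Real.log_exp, log_kernelPDF _ _ _ hv0]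
    ring
  have i1 : Integrable (fun p : ℝ × ℝ => p.2 ^ 2) (jointLaw μ) := by
    rw [integrable_joint_iff μ (by fun_prop)]
    exact integrable_out_sq μ A hμ
  have e1 : ∫ p : ℝ × ℝ, p.2 ^ 2 ∂(jointLaw μ) = ∫ x, x ^ 2 ∂μ + 1 := by
    rw [integral_joint μ (f := fun p : ℝ × ℝ => p.2 ^ 2) (by fun_prop)]
    exact integral_out_sq μ A hμ
  have hFm : MeasurableSet (Prod.snd ⁻¹' F : Set (ℝ × ℝ)) := measurable_snd hF
  have eind : ∀ p : ℝ × ℝ, F.indicator (1 : ℝ → ℝ) p.2 =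
      (Prod.snd ⁻¹' F : Set (ℝ × ℝ)).indicator (1 : ℝ × ℝ → ℝ) p := fun p => by
    by_cases hp : p.2 ∈ F <;> simp [Set.indicator, hp]
  have i2 : Integrable (fun p : ℝ × ℝ => F.indicator (1 : ℝ → ℝ) p.2) (jointLaw μ) := by
    simp only [eind]
    exact (integrable_const (1 : ℝ)).indicator hFm
  have e2 : ∫ p : ℝ × ℝ, F.indicator (1 : ℝ → ℝ) p.2 ∂(jointLaw μ) =
      (jointLaw μ).real (Prod.snd ⁻¹' F) := by
    simp only [eind]
    exact integral_indicator_one hFm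
  have i3 : Integrable (fun p : ℝ × ℝ => (-(1/2) * Real.log (2 * Real.pi * v) - Real.log M)
      - p.2 ^ 2 / (2 * v)) (jointLaw μ) := (integrable_const _).sub (i1.div_const _)
  have hri : Integrable (fun p : ℝ × ℝ => Real.log (r p.2)) (jointLaw μ) := by
    simp only [hlogr]
    exact i3.add (i2.const_mul l)
  refine (mutInfo_le μ A hA hμ r hr hr0 hr1 hri).trans ?_
  rw [EReal.coe_le_coe_iff, integral_logKernel]
  simp only [hlogr]
  rw [integral_add i3 (i2.const_mul l), integral_sub (integrable_const _) (i1.div_const _),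
    integral_const_mul, integral_div, e1, e2, hv, integral_const,
    Real.log_mul (x := 2 * Real.pi) (y := 1 + P) (by positivity) (by positivity)]
  simp only [probReal_univ, one_smul]
  have h5 : (∫ x, x ^ 2 ∂μ + 1) / (2 * (1 + P)) ≤ 1 / 2 := by
    rw [div_le_iff₀ (by positivity)]; linarith
  linarith

/-- Non-asymptotic converse bound for the amplitude-constrained capacity:
for all `A, P > 0`, with `A₁ = √(A² + P ln(1+P))`,
`(1/2)ln(1+P) - C(A,P) ≥ 8 ((√(1+P)-1) ln(1+P)/(A+A₁))² φ(√(1+P) A₁/P + A/P)²`. -/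
theorem smith_capacity_nonasymptotic_converse
    (A P : ℝ) (hA : 0 < A) (hP : 0 < P)
    (A₁ : ℝ) (hA₁ : A₁ = Real.sqrt (A ^ 2 + P * Real.log (1 + P))) :
    ((8 * ((Real.sqrt (1 + P) - 1) * Real.log (1 + P) / (A + A₁)) ^ 2
        * stdPhi (Real.sqrt (1 + P) * A₁ / P + A / P) ^ 2 : ℝ) : EReal) ≤
      (((1 / 2) * Real.log (1 + P) : ℝ) : EReal) - CAP A P := by
  have hL : 0 < Real.log (1 + P) := Real.log_pos (by linarith)
  have hσ1 : 1 < √(1 + P) := by rw [Real.lt_sqrt (by norm_num)]; linarith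
  have hσ2 : √(1 + P) ^ 2 = 1 + P := Real.sq_sqrt (by linarith)
  have hA₁2 : A₁ ^ 2 = A ^ 2 + P * Real.log (1 + P) := by
    rw [hA₁]; exact Real.sq_sqrt (by positivity)
  have hA₁0 : 0 < A₁ := by rw [hA₁]; exact Real.sqrt_pos.2 (by positivity)
  have hPσ : P = √(1 + P) ^ 2 - 1 := by linarith
  set L := Real.log (1 + P)
  set σ := √(1 + P)
  set t := σ * A₁ / P + A / P with ht
  set s := (σ * A + A₁) / P with hs
  have hts : t - s = (σ - 1) * L / (A + A₁) := by
    rw [ht, hs]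
    field_simp
    linear_combination (σ - 1) * hA₁2
  have hs0 : 0 ≤ s := by positivity
  have hts0 : 0 < t - s := by
    rw [hts]; have : 0 < σ - 1 := by linarith
    positivity
  have hy : t + A = σ * s := by
    rw [ht, hs]
    field_simp
    linear_combination (-A) * hσ2
  rw [← hts]
  set d := 2 * (t - s) * stdPhi t with hd
  have hd0 : 0 ≤ d := by
    have : 0 ≤ stdPhi t := by unfold stdPhi; positivity
    positivity
  have hc : 8 * (t - s) ^ 2 * stdPhi t ^ 2 = 2 * d ^ 2 := by rw [hd]; ring
  rw [hc]
  have hcap : CAP A P ≤ ((1 / 2 * L - 2 * d ^ 2 : ℝ) : EReal) := by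
    unfold CAP
    refine iSup₂_le fun μ hμ => ?_
    obtain ⟨hprob, hμA, hμP⟩ := hμ
    have hae : ∀ᵐ x ∂μ, |x| ≤ A := by
      rw [ae_iff]; simpa using hμA
    refine (mutInfo_bound μ A P hA hP hae hμP ⟨1 + P, by linarith⟩ rfl
      (Set.Icc (-(σ * s)) (σ * s)) measurableSet_Icc (4 * d)).trans ?_
    rw [EReal.coe_le_coe_iff]
    have h1 := gauss_diff s t hs0 (by linarith)
    have h2 := gauss_scale P s hP ⟨1 + P, by linarith⟩ rfl
    have h3 := out_prob μ A t hae
    rw [hy] at h3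
    rw [h2]
    have h4 : d ≤ (jointLaw μ).real (Prod.snd ⁻¹' (Set.Icc (-(σ * s)) (σ * s))) -
      (gaussianReal 0 1).real (Set.Icc (-s) s) := by linarith
    nlinarith [mul_le_mul_of_nonneg_left h4 hd0]
  calc ((2 * d ^ 2 : ℝ) : EReal)
      = ((1 / 2 * L : ℝ) : EReal) - ((1 / 2 * L - 2 * d ^ 2 : ℝ) : EReal) := by
        rw [← EReal.coe_sub]; congr 1; ring
    _ ≤ _ := EReal.sub_le_sub le_rfl hcap
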